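/- Let a > 0 be real and not an odd positive integer, and let 0 < w ≤ 1 be real. Then ∫_{−∞}^{∞} exp((v² + i·v)·log w) · (2π)^{4a(v² + i·v)} / ( cos(2π·a·(v² + i·v)) · Γ(4a·(v² + i·v)) · cosh(π·v) ) dv = w^{1/4} · (2π)^a / ( cos(π·a/2) · Γ(a) ) − 2π · ∑_{n=0}^{∞} (−1)^n · w^{(2n+1)/(4a)} · (2π)^{2n} / ( Γ(2n+1) · √(a·(2n+1) − a²) · sinh( π·√(a·(2n+1) − a²)/(2a) ) ). -/

import Mathlib

/-!
With `u = v + i/2` one has `v² + iv = u² + 1/4 =: z` and `sinh (πu) = i cosh (πv)`, so the integral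
is that of `i K(u) / D(u)` over the line `im u = 1/2`, where
`K(u) = w^z (2π)^(4az) / Γ(4az)` (`numK`) is entire and even and
`D(u) = cos (2πaz) sinh (πu)` (`denD`) is odd. Hence `K / D` is odd, the integrals over the lines
`im u = ±1/2` are related by `u ↦ -u`, and the integral equals `π` times the sum of the residues of
`K / D` in the strip `|im u| < 1/2`.

The poles in the strip are `u = 0` and `u = ±pₙ` with `pₙ² + 1/4 = (2n+1)/(4a)`, that is
`pₙ = √(a(2n+1) - a²)/(2a)` (`poleP`). They are simple because `a` is not an odd integer. The
residue at `0` gives the first term of the closed form (`numK_at_zero`) and the equal residues at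
`±pₙ` give the `n`-th term of the series (`numK_poleP`).

The residue theorem is applied on the rectangles `[-R, R] × [-1/2, 1/2]` with `R² = N/a - 1/4`
(`contour_identity`). For this choice of `R` the cosine stays away from `0` on the vertical sides
(`side_cos_bound`), `K` is bounded there because `1/Γ` decays faster than any exponential
(`exists_inv_Gamma_bound`, `exists_numK_bound`), and `|sinh (πu)| ≥ π |re u|`; therefore the vertical
sides contribute nothing in the limit `N → ∞` (`integral_top_eq`).
-/

open Complex MeasureTheory
open scoped Real

/-! ### The residue theorem on a rectangle -/

/-- Integral of `f` over the positively oriented boundary of `[x₁, x₂] × [y₁, y₂]`. -/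
noncomputable def rectInt (f : ℂ → ℂ) (x₁ x₂ y₁ y₂ : ℝ) : ℂ :=
  (∫ x : ℝ in x₁..x₂, f (x + y₁ * I)) - (∫ x : ℝ in x₁..x₂, f (x + y₂ * I)) +
    I * (∫ y : ℝ in y₁..y₂, f (x₂ + y * I)) - I * (∫ y : ℝ in y₁..y₂, f (x₁ + y * I))

/-- `rectInt` depends only on the values on the boundary of the rectangle. -/
lemma rectInt_congr {f g : ℂ → ℂ} {x₁ x₂ y₁ y₂ : ℝ} (hx : x₁ ≤ x₂) (hy : y₁ ≤ y₂)
    (h : ∀ u : ℂ, u ∈ (Set.Icc x₁ x₂ ×ℂ Set.Icc y₁ y₂) →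
      u ∉ (Set.Ioo x₁ x₂ ×ℂ Set.Ioo y₁ y₂) → f u = g u) :
    rectInt f x₁ x₂ y₁ y₂ = rectInt g x₁ x₂ y₁ y₂ := by
  unfold rectInt
  congr 1
  · congr 1
    · congr 1
      · refine intervalIntegral.integral_congr fun x hxx => h _ ?_ ?_
        · rw [Set.uIcc_of_le hx] at hxx
          simp [mem_reProdIm, hxx.1, hxx.2, hy]
        · simp [mem_reProdIm]
      · refine intervalIntegral.integral_congr fun x hxx => h _ ?_ ?_
        · rw [Set.uIcc_of_le hx] at hxx
          simp [mem_reProdIm, hxx.1, hxx.2, hy]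
        · simp [mem_reProdIm]
    · congr 1
      refine intervalIntegral.integral_congr fun x hxx => h _ ?_ ?_
      · rw [Set.uIcc_of_le hy] at hxx
        simp [mem_reProdIm, hxx.1, hxx.2, hx]
      · simp [mem_reProdIm]
  · congr 1
    refine intervalIntegral.integral_congr fun x hxx => h _ ?_ ?_
    · rw [Set.uIcc_of_le hy] at hxx
      simp [mem_reProdIm, hxx.1, hxx.2, hx]
    · simp [mem_reProdIm]

lemma rectInt_add {f g : ℂ → ℂ} {x₁ x₂ y₁ y₂ : ℝ} (hx : x₁ ≤ x₂) (hy : y₁ ≤ y₂)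
    (hf : ContinuousOn f ((Set.Icc x₁ x₂ ×ℂ Set.Icc y₁ y₂) \ (Set.Ioo x₁ x₂ ×ℂ Set.Ioo y₁ y₂)))
    (hg : ContinuousOn g ((Set.Icc x₁ x₂ ×ℂ Set.Icc y₁ y₂) \ (Set.Ioo x₁ x₂ ×ℂ Set.Ioo y₁ y₂))) :
    rectInt (fun u => f u + g u) x₁ x₂ y₁ y₂
      = rectInt f x₁ x₂ y₁ y₂ + rectInt g x₁ x₂ y₁ y₂ := by
  have H : ∀ k : ℂ → ℂ, ContinuousOn k
      ((Set.Icc x₁ x₂ ×ℂ Set.Icc y₁ y₂) \ (Set.Ioo x₁ x₂ ×ℂ Set.Ioo y₁ y₂)) →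
      ((∀ y, y = y₁ ∨ y = y₂ →
        IntervalIntegrable (fun x : ℝ => k (x + y * I)) volume x₁ x₂) ∧
       (∀ x, x = x₁ ∨ x = x₂ →
        IntervalIntegrable (fun y : ℝ => k (x + y * I)) volume y₁ y₂)) := by
    intro k hk
    constructor
    · intro y hyy
      refine ContinuousOn.intervalIntegrable (hk.comp (by fun_prop) fun x hxx => ?_)
      rw [Set.uIcc_of_le hx] at hxx
      rcases hyy with rfl | rfl <;> simp [mem_reProdIm, hxx.1, hxx.2, hy]
    · intro x hxx
      refine ContinuousOn.intervalIntegrable (hk.comp (by fun_prop) fun y hyy => ?_)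
      rw [Set.uIcc_of_le hy] at hyy
      rcases hxx with rfl | rfl <;> simp [mem_reProdIm, hyy.1, hyy.2, hx]
  obtain ⟨f1, f2⟩ := H f hf
  obtain ⟨g1, g2⟩ := H g hg
  unfold rectInt
  rw [intervalIntegral.integral_add (f1 _ (.inl rfl)) (g1 _ (.inl rfl)),
    intervalIntegral.integral_add (f1 _ (.inr rfl)) (g1 _ (.inr rfl)),
    intervalIntegral.integral_add (f2 _ (.inl rfl)) (g2 _ (.inl rfl)),
    intervalIntegral.integral_add (f2 _ (.inr rfl)) (g2 _ (.inr rfl))]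
  ring

/-- The residue theorem for `r / (u - p)`. On each side an antiderivative is `r * log (u - p)`, except
on the left side, where `u - p` crosses the branch cut and `r * log (p - u)` is used instead; the
two resulting jumps of `π * I` add up to `2 * π * I`. -/
lemma rectInt_inv {p : ℂ} {x₁ x₂ y₁ y₂ : ℝ} (hp : p ∈ Set.Ioo x₁ x₂ ×ℂ Set.Ioo y₁ y₂) (r : ℂ) :
    rectInt (fun u => r / (u - p)) x₁ x₂ y₁ y₂ = 2 * π * I * r := by
  obtain ⟨⟨h1, h2⟩, h3, h4⟩ := hp
  have hor : ∀ y : ℝ, y ≠ p.im → ∫ x : ℝ in x₁..x₂, r / ((x + y * I : ℂ) - p)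
      = r * log (x₂ + y * I - p) - r * log (x₁ + y * I - p) := by
    intro y hy
    have hne : ∀ x : ℝ, (x + y * I - p : ℂ) ∈ slitPlane := fun x => by
      refine .inr ?_
      simpa [sub_eq_zero] using hy
    refine intervalIntegral.integral_eq_sub_of_hasDerivAt
      (f := fun x : ℝ => r * log (x + y * I - p)) (fun x _ => ?_) ?_
    · have : HasDerivAt (fun x : ℝ => (x + y * I - p : ℂ)) 1 x :=
        ((ofRealCLM.hasDerivAt (x := x)).add_const _).sub_const _
      convert! (this.clog_real (hne x)).const_mul r using 1
      ring
    · refine Continuous.intervalIntegrable ?_ _ _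
      refine continuous_const.div (by fun_prop) fun x => slitPlane_ne_zero (hne x)
  have vert : ∀ x : ℝ, ∀ c : ℂ, c ≠ 0 → (∀ y : ℝ, c * (x + y * I - p : ℂ) ∈ slitPlane) →
      I * ∫ y : ℝ in y₁..y₂, r / ((x + y * I : ℂ) - p)
      = r * log (c * (x + y₂ * I - p)) - r * log (c * (x + y₁ * I - p)) := by
    intro x c hc hne
    rw [← intervalIntegral.integral_const_mul]
    refine intervalIntegral.integral_eq_sub_of_hasDerivAt
      (f := fun y : ℝ => r * log (c * (x + y * I - p))) (fun y _ => ?_) ?_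
    · have : HasDerivAt (fun y : ℝ => (c * (x + y * I - p : ℂ))) (c * (1 * I)) y :=
        ((((ofRealCLM.hasDerivAt (x := y)).mul_const I).const_add _).sub_const _).const_mul c
      convert! (this.clog_real (hne y)).const_mul r using 1
      have := slitPlane_ne_zero (hne y)
      have h' := right_ne_zero_of_mul this
      field_simp
    · refine Continuous.intervalIntegrable ?_ _ _
      refine continuous_const.mul (continuous_const.div (by fun_prop) fun y => ?_)
      exact right_ne_zero_of_mul (slitPlane_ne_zero (hne y))
  -- `c = -1` on the left side turns `u - p` into `p - u`, which avoids the branch cut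
  have v2 := vert x₂ 1 one_ne_zero (fun y => .inl (by simpa using h2))
  have v1 := vert x₁ (-1) (by simp) (fun y => .inl (by simpa using h1))
  have t1 : log (-1 * (x₁ + y₂ * I - p)) = log (x₁ + y₂ * I - p) - π * I := by
    rw [neg_one_mul, log, log, arg_neg_eq_arg_sub_pi_of_im_pos (by simpa using h4)]
    simp only [norm_neg]
    push_cast; ring
  have t2 : log (-1 * (x₁ + y₁ * I - p)) = log (x₁ + y₁ * I - p) + π * I := by
    rw [neg_one_mul, log, log, arg_neg_eq_arg_add_pi_of_im_neg (by simpa using h3)]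
    simp only [norm_neg]
    push_cast; ring
  unfold rectInt
  rw [hor _ h3.ne, hor _ h4.ne', v1, v2, t1, t2, one_mul, one_mul]
  ring

open Filter Topology in
/-- Residue theorem for finitely many simple poles inside a rectangle: subtract the principal parts
one pole at a time, remove the singularity, and finish with Cauchy's theorem. -/
lemma rectInt_residue {x₁ x₂ y₁ y₂ : ℝ} (hx : x₁ ≤ x₂) (hy : y₁ ≤ y₂) (r : ℂ → ℂ) (S : Finset ℂ) :
    ∀ g : ℂ → ℂ, (∀ p ∈ S, p ∈ Set.Ioo x₁ x₂ ×ℂ Set.Ioo y₁ y₂) →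
    DifferentiableOn ℂ g ((Set.Icc x₁ x₂ ×ℂ Set.Icc y₁ y₂) \ S) →
    (∀ p ∈ S, Tendsto (fun u => (u - p) * g u) (𝓝[≠] p) (𝓝 (r p))) →
    rectInt g x₁ x₂ y₁ y₂ = 2 * π * I * ∑ p ∈ S, r p := by
  induction S using Finset.induction_on with
  | empty =>
    intro g _ hd _
    have := integral_boundary_rect_eq_zero_of_differentiableOn g (x₁ + y₁ * I) (x₂ + y₂ * I)
      (by simpa [Set.uIcc_of_le hx, Set.uIcc_of_le hy] using hd)
    simpa [rectInt] using this
  | insert p S hpS ih =>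
    intro g hS hd hr
    have hp := hS p (Finset.mem_insert_self _ _)
    have hopen : IsOpen (Set.Ioo x₁ x₂ ×ℂ Set.Ioo y₁ y₂) := isOpen_Ioo.reProdIm isOpen_Ioo
    have hsub : (Set.Ioo x₁ x₂ ×ℂ Set.Ioo y₁ y₂) ⊆ (Set.Icc x₁ x₂ ×ℂ Set.Icc y₁ y₂) :=
      Set.inter_subset_inter (Set.preimage_mono Set.Ioo_subset_Icc_self)
        (Set.preimage_mono Set.Ioo_subset_Icc_self)
    set f : ℂ → ℂ := fun u => g u - r p / (u - p) with hf
    set g1 := Function.update f p (limUnder (𝓝[≠] p) f) with hg1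
    have hnhds : ((Set.Icc x₁ x₂ ×ℂ Set.Icc y₁ y₂) \ (S : Set ℂ)) ∈ 𝓝 p := by
      refine inter_mem (mem_of_superset (hopen.mem_nhds hp) hsub) ?_
      exact S.finite_toSet.isClosed.isOpen_compl.mem_nhds hpS
    have hd1 : DifferentiableOn ℂ g1 ((Set.Icc x₁ x₂ ×ℂ Set.Icc y₁ y₂) \ (S : Set ℂ)) := by
      refine differentiableOn_update_limUnder_of_isLittleO hnhds ?_ ?_
      · refine DifferentiableOn.sub (hd.mono ?_) ?_
        · intro u hu
          refine ⟨hu.1.1, ?_⟩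
          simpa using ⟨hu.2, hu.1.2⟩
        · refine (differentiableOn_const _).div (by fun_prop) fun u hu => sub_ne_zero.2 hu.2
      · rw [Asymptotics.isLittleO_iff_tendsto']
        · have h0 := hr p (Finset.mem_insert_self _ _)
          have h1 : Tendsto (fun u : ℂ => (u - p) * f p) (𝓝[≠] p) (𝓝 ((p - p) * f p)) := by
            refine (Continuous.tendsto (by fun_prop) p).mono_left nhdsWithin_le_nhds
          have h2 := (h0.sub_const (r p)).sub h1
          simp only [sub_self, zero_mul] at h2
          refine h2.congr' ?_
          filter_upwards [self_mem_nhdsWithin] with u hu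
          have : u - p ≠ 0 := sub_ne_zero.2 hu
          simp only [hf]
          field_simp
        · filter_upwards [self_mem_nhdsWithin] with u hu h
          exact absurd h (inv_ne_zero (sub_ne_zero.2 hu))
    have key := ih g1 (fun q hq => hS q (Finset.mem_insert_of_mem hq)) hd1 (by
      intro q hq
      have hqp : q ≠ p := fun h => hpS (h ▸ hq)
      have h0 := hr q (Finset.mem_insert_of_mem hq)
      have h1 : Tendsto (fun u : ℂ => (u - q) * (r p / (u - p))) (𝓝[≠] q)
          (𝓝 ((q - q) * (r p / (q - p)))) := by
        refine ContinuousAt.tendsto ?_ |>.mono_left nhdsWithin_le_nhds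
        refine (by fun_prop : ContinuousAt (fun u : ℂ => u - q) q).mul
          (continuousAt_const.div (by fun_prop) (sub_ne_zero.2 hqp))
      have h2 := h0.sub h1
      simp only [sub_self, zero_mul, sub_zero] at h2
      refine h2.congr' ?_
      filter_upwards [mem_nhdsWithin_of_mem_nhds (isOpen_ne.mem_nhds hqp)] with u hu
      rw [hg1, Function.update_of_ne hu]
      simp only [hf]; ring)
    have hbd : ∀ u : ℂ, u ∉ (Set.Ioo x₁ x₂ ×ℂ Set.Ioo y₁ y₂) → u ≠ p := by
      rintro u hu rfl; exact hu hp
    rw [Finset.sum_insert hpS, mul_add, ← rectInt_inv hp, ← key, add_comm,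
      ← rectInt_add hx hy (hd1.continuousOn.mono ?_) ?_]
    · refine rectInt_congr hx hy fun u _ hu => ?_
      rw [hg1, Function.update_of_ne (hbd u hu)]
      simp [hf]
    · rintro u hu
      exact ⟨hu.1, fun h => hu.2 (hS u (Finset.mem_insert_of_mem h))⟩
    · exact continuousOn_const.div (by fun_prop) fun u hu => sub_ne_zero.2 (hbd u hu.2)

open Filter Topology in
/-- Residue theorem for a quotient `K / D` whose denominator has only simple zeros in the rectangle. -/
lemma rectInt_div {x₁ x₂ y₁ y₂ : ℝ} (hx : x₁ ≤ x₂) (hy : y₁ ≤ y₂) {K D D' : ℂ → ℂ}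
    (hK : Differentiable ℂ K) (hD : ∀ u, HasDerivAt D (D' u) u) (S : Finset ℂ)
    (hS : ∀ p ∈ S, p ∈ Set.Ioo x₁ x₂ ×ℂ Set.Ioo y₁ y₂)
    (h0 : ∀ p ∈ S, D p = 0) (h1 : ∀ p ∈ S, D' p ≠ 0)
    (h2 : ∀ u ∈ (Set.Icc x₁ x₂ ×ℂ Set.Icc y₁ y₂), D u = 0 → u ∈ S) :
    rectInt (fun u => K u / D u) x₁ x₂ y₁ y₂ = 2 * π * I * ∑ p ∈ S, K p / D' p := by
  refine rectInt_residue hx hy (fun p => K p / D' p) S _ hS ?_ ?_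
  · refine hK.differentiableOn.div
      (fun u _ => (hD u).differentiableAt.differentiableWithinAt) fun u hu h => hu.2 (h2 u hu.1 h)
  · intro p hp
    have hs := (hasDerivAt_iff_tendsto_slope.1 (hD p)).inv₀ (h1 p hp)
    have hk : Tendsto K (𝓝[≠] p) (𝓝 (K p)) :=
      (hK.continuous.tendsto p).mono_left nhdsWithin_le_nhds
    refine (hk.mul hs).congr fun u => ?_
    simp only [slope_def_field, h0 p hp, sub_zero, inv_div]
    ring

/-! ### Growth of the reciprocal Gamma function -/

lemma norm_Gamma_le {s : ℂ} (hs : 0 < s.re) : ‖Gamma s‖ ≤ Real.Gamma s.re := by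
  rw [Complex.Gamma_eq_integral hs, Real.Gamma_eq_integral hs, GammaIntegral]
  refine (norm_integral_le_integral_norm _).trans_eq ?_
  refine setIntegral_congr_fun measurableSet_Ioi fun x hx => ?_
  have hx : 0 < x := hx
  simp [norm_cpow_eq_rpow_re_of_pos hx, norm_exp]

lemma norm_sin_le_exp (z : ℂ) : ‖sin z‖ ≤ Real.exp |z.im| := by
  rw [Complex.sin, norm_div, norm_mul, norm_I, mul_one]
  have h : ‖cexp (-z * I) - cexp (z * I)‖ ≤ Real.exp |z.im| + Real.exp |z.im| := by
    refine (norm_sub_le _ _).trans (add_le_add ?_ ?_) <;> rw [norm_exp] <;>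
      refine Real.exp_le_exp.2 ?_
    · simpa using le_abs_self z.im
    · simpa using neg_le_abs z.im
  rw [div_le_iff₀ (by simp)]
  simpa [mul_two] using h

/-- Bound for `1 / Γ` on the strip `1 / 2 ≤ re s ≤ 3 / 2`: compactness for small `im s`, and the
reflection formula together with `|Γ (2 - s)| ≤ Γ (2 - re s)` otherwise. -/
lemma exists_inv_Gamma_bound_strip : ∃ M : ℝ, 0 < M ∧ ∀ s : ℂ, 1 / 2 ≤ s.re → s.re ≤ 3 / 2 →
    ‖(Gamma s)⁻¹‖ ≤ M * Real.exp (π * |s.im|) := by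
  have hcpt : IsCompact (Set.Icc (1 / 2 : ℝ) (3 / 2) ×ℂ Set.Icc (-1 : ℝ) 1) :=
    isCompact_Icc.reProdIm isCompact_Icc
  obtain ⟨M₁, hM₁⟩ := hcpt.exists_bound_of_continuousOn
    differentiable_one_div_Gamma.continuous.continuousOn
  have hG : ContinuousOn Real.Gamma (Set.Icc (1 / 2) (3 / 2)) := fun x hx =>
    ((Real.differentiableAt_Gamma fun m => by
      have := hx.1; have := m.cast_nonneg (α := ℝ); linarith).continuousAt.continuousWithinAt)
  obtain ⟨M₂, hM₂⟩ := isCompact_Icc.exists_bound_of_continuousOn hG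
  refine ⟨max 1 (max M₁ M₂), by positivity, fun s h1 h2 => ?_⟩
  rcases le_or_gt |s.im| 1 with hi | hi
  · have h := hM₁ s ⟨⟨h1, h2⟩, abs_le.1 hi⟩
    calc ‖(Gamma s)⁻¹‖ ≤ max 1 (max M₁ M₂) := h.trans ((le_max_left _ _).trans (le_max_right _ _))
      _ ≤ _ := le_mul_of_one_le_right (by positivity) (Real.one_le_exp (by positivity))
  · have hs1 : 1 ≤ ‖1 - s‖ := by
      refine hi.le.trans ?_
      simpa using abs_im_le_norm (1 - s)
    have hne : (1 - s) ≠ 0 := by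
      rw [← norm_pos_iff]; linarith
    have hrec := Gamma_add_one (1 - s) hne
    have h2s : ‖Gamma (1 - s + 1)‖ ≤ M₂ := by
      refine (norm_Gamma_le (by simp; linarith)).trans ?_
      refine (le_abs_self _).trans (hM₂ _ ⟨?_, ?_⟩) <;> simp <;> linarith
    have hnz : Gamma (1 - s) ≠ 0 := by
      intro h
      rw [h, mul_zero] at hrec
      exact Gamma_ne_zero_of_re_pos (by simp; linarith) hrec
    have hGs : Gamma s ≠ 0 := Gamma_ne_zero_of_re_pos (by linarith)
    have href := Gamma_mul_Gamma_one_sub s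
    have hsin : sin (π * s) ≠ 0 := by
      intro h
      rw [h, div_zero] at href
      exact (mul_ne_zero hGs hnz) href
    have hpi : (π : ℂ) ≠ 0 := by simp
    have hinv : (Gamma s)⁻¹ = Gamma (1 - s + 1) * sin (π * s) / (π * (1 - s)) := by
      rw [hrec]
      rw [eq_div_iff hsin, mul_comm (π : ℂ) s] at href
      field_simp
      linear_combination -href
    have hsn := norm_sin_le_exp (π * s)
    rw [hinv, norm_div, norm_mul, norm_mul]
    have him : (π * s : ℂ).im = π * s.im := by simp
    rw [him, abs_mul, abs_of_pos Real.pi_pos] at hsn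
    have hd : 1 ≤ ‖(π : ℂ)‖ * ‖1 - s‖ := by
      have : (1:ℝ) ≤ ‖(π : ℂ)‖ := by
        rw [norm_real, Real.norm_of_nonneg Real.pi_pos.le]; linarith [Real.pi_gt_three]
      nlinarith
    refine (div_le_self (by positivity) hd).trans ?_
    refine mul_le_mul (h2s.trans ((le_max_right _ _).trans (le_max_right _ _))) hsn
      (norm_nonneg _) (by positivity)

/-- On the half-plane `1 / 2 ≤ re s` the function `1 / Γ` decays faster than any exponential in
`re s`, up to a factor `exp (π * |im s|)`. The functional equation reduces this to
`exists_inv_Gamma_bound_strip` with a gain of `2 ^ k / k!` after `k` steps. -/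
lemma exists_inv_Gamma_bound (A : ℝ) (hA : 1 ≤ A) : ∃ C : ℝ, 0 < C ∧ ∀ s : ℂ, 1 / 2 ≤ s.re →
    ‖(Gamma s)⁻¹‖ ≤ C * A ^ (-s.re) * Real.exp (π * |s.im|) := by
  obtain ⟨M, hM, hb⟩ := exists_inv_Gamma_bound_strip
  have hstep : ∀ k : ℕ, ∀ s : ℂ, 1 / 2 ≤ s.re → s.re ≤ 3 / 2 →
      ‖(Gamma (s + k))⁻¹‖ ≤ M * Real.exp (π * |s.im|) * (2 ^ k / k.factorial) := by
    intro k
    induction k with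
    | zero => intro s h1 h2; simpa using hb s h1 h2
    | succ k ih =>
      intro s h1 h2
      have hre : (s + k).re = s.re + k := by simp
      have hk0 : (0 : ℝ) ≤ k := k.cast_nonneg
      have hne : s + k ≠ 0 := by
        intro h; rw [h] at hre; simp at hre; linarith
      have hlow : ((k : ℝ) + 1) / 2 ≤ ‖s + k‖ := by
        refine le_trans ?_ (re_le_norm _)
        rw [hre]; linarith
      have e : s + ((k + 1 : ℕ) : ℂ) = (s + k) + 1 := by push_cast; ring
      rw [e, Gamma_add_one _ hne, mul_inv, norm_mul, norm_inv]
      have := ih s h1 h2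
      calc ‖s + k‖⁻¹ * ‖(Gamma (s + k))⁻¹‖
          ≤ (((k : ℝ) + 1) / 2)⁻¹ * (M * Real.exp (π * |s.im|) * (2 ^ k / k.factorial)) := by
            gcongr
        _ = _ := by
            rw [Nat.factorial_succ]; push_cast; field_simp; ring
  refine ⟨M * Real.exp (2 * A) * A ^ (3 / 2 : ℝ), by positivity, fun s hs => ?_⟩
  set k := ⌊s.re - 1 / 2⌋₊ with hk
  have hk1 : (k : ℝ) ≤ s.re - 1 / 2 := Nat.floor_le (by linarith)
  have hk2 : s.re - 1 / 2 < k + 1 := Nat.lt_floor_add_one _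
  have h := hstep k (s - k) (by simp; linarith) (by simp; linarith)
  simp only [sub_add_cancel, sub_im, natCast_im, sub_zero] at h
  have hA0 : 0 < A := by linarith
  have hfac : (2 : ℝ) ^ k / k.factorial ≤ Real.exp (2 * A) * (A ^ (3 / 2 : ℝ) * A ^ (-s.re)) := by
    have h1 := Real.pow_div_factorial_le_exp (x := 2 * A) (by positivity) k
    have h2 : 1 ≤ A ^ k * (A ^ (3 / 2 : ℝ) * A ^ (-s.re)) := by
      rw [← Real.rpow_natCast, ← Real.rpow_add hA0, ← Real.rpow_add hA0]
      exact Real.one_le_rpow hA (by linarith)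
    calc (2 : ℝ) ^ k / k.factorial
        ≤ (2 : ℝ) ^ k / k.factorial * (A ^ k * (A ^ (3 / 2 : ℝ) * A ^ (-s.re))) :=
          le_mul_of_one_le_right (by positivity) h2
      _ = (2 * A) ^ k / k.factorial * (A ^ (3 / 2 : ℝ) * A ^ (-s.re)) := by
          rw [mul_pow]; ring
      _ ≤ _ := by gcongr
  calc _ ≤ _ := h
    _ ≤ M * Real.exp (π * |s.im|) * (Real.exp (2 * A) * (A ^ (3 / 2 : ℝ) * A ^ (-s.re))) := by
        gcongr
    _ = _ := by ring

/-! ### The integrand in the shifted variable -/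

lemma norm_cos_sq (z : ℂ) : ‖cos z‖ ^ 2 = Real.cos z.re ^ 2 + Real.sinh z.im ^ 2 := by
  have h : cos z = ((Real.cos z.re * Real.cosh z.im : ℝ) : ℂ)
      + ((-(Real.sin z.re * Real.sinh z.im) : ℝ) : ℂ) * I := by
    rw [cos_eq]; push_cast; ring
  rw [h, ← normSq_eq_norm_sq, normSq_add_mul_I]
  have h1 := Real.cosh_sq z.im
  have h2 := Real.sin_sq_add_cos_sq z.re
  linear_combination Real.cos z.re ^ 2 * h1 + Real.sinh z.im ^ 2 * h2

lemma norm_sinh_sq (z : ℂ) : ‖sinh z‖ ^ 2 = Real.sinh z.re ^ 2 + Real.sin z.im ^ 2 := by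
  have h : sinh z = ((Real.sinh z.re * Real.cos z.im : ℝ) : ℂ)
      + ((Real.cosh z.re * Real.sin z.im : ℝ) : ℂ) * I := by
    conv_lhs => rw [← re_add_im z]
    rw [sinh_add, sinh_mul_I, cosh_mul_I]
    push_cast; ring
  rw [h, ← normSq_eq_norm_sq, normSq_add_mul_I]
  have h1 := Real.cosh_sq z.re
  have h2 := Real.sin_sq_add_cos_sq z.im
  linear_combination Real.sin z.im ^ 2 * h1 + Real.sinh z.re ^ 2 * h2

lemma sq_le_sinh_sq (x : ℝ) : x ^ 2 ≤ Real.sinh x ^ 2 := by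
  rw [sq_le_sq, Real.abs_sinh]
  exact Real.self_le_sinh_iff.2 (abs_nonneg x)

/-- The entire factor `w ^ z * (2π) ^ (4az) / Γ (4az)` of the integrand, with `z = u ^ 2 + 1 / 4`.
Since Mathlib sets `Γ = 0` at its poles, writing the last factor with `⁻¹` gives exactly the
entire function `1 / Γ`. -/
noncomputable def numK (a w : ℝ) (u : ℂ) : ℂ :=
  cexp ((u ^ 2 + 1 / 4) * (Real.log w : ℂ)) *
    cexp ((4 * (a : ℂ) * (u ^ 2 + 1 / 4)) * (Real.log (2 * π) : ℂ)) *
    (Gamma (4 * (a : ℂ) * (u ^ 2 + 1 / 4)))⁻¹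

/-- The denominator `cos (2πaz) * sinh (πu)` of the integrand, with `z = u ^ 2 + 1 / 4`. -/
noncomputable def denD (a : ℝ) (u : ℂ) : ℂ :=
  cos (2 * (π : ℂ) * a * (u ^ 2 + 1 / 4)) * sinh (π * u)

/-- The derivative of `denD a`. -/
noncomputable def denD' (a : ℝ) (u : ℂ) : ℂ :=
  -sin (2 * (π : ℂ) * a * (u ^ 2 + 1 / 4)) * (4 * π * a * u) * sinh (π * u) +
    cos (2 * (π : ℂ) * a * (u ^ 2 + 1 / 4)) * (cosh (π * u) * π)

lemma differentiable_numK (a w : ℝ) : Differentiable ℂ (numK a w) := by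
  unfold numK
  have h : Differentiable ℂ fun u : ℂ => (Gamma (4 * (a : ℂ) * (u ^ 2 + 1 / 4)))⁻¹ :=
    differentiable_one_div_Gamma.comp (by fun_prop)
  refine Differentiable.mul (by fun_prop) h

lemma hasDerivAt_denD (a : ℝ) (u : ℂ) : HasDerivAt (denD a) (denD' a u) u := by
  have h1 : HasDerivAt (fun u : ℂ => 2 * (π : ℂ) * a * (u ^ 2 + 1 / 4)) (4 * π * a * u) u := by
    convert! (((hasDerivAt_pow 2 u).add_const (1 / 4 : ℂ)).const_mul (2 * (π : ℂ) * a)) using 1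
    push_cast; ring
  have h2 : HasDerivAt (fun u : ℂ => (π : ℂ) * u) π u := by
    simpa using (hasDerivAt_id u).const_mul (π : ℂ)
  exact h1.ccos.mul h2.csinh

lemma numK_neg (a w : ℝ) (u : ℂ) : numK a w (-u) = numK a w u := by simp [numK]

lemma denD_neg (a : ℝ) (u : ℂ) : denD a (-u) = -denD a u := by simp [denD, sinh_neg]

lemma denD'_neg (a : ℝ) (u : ℂ) : denD' a (-u) = denD' a u := by simp [denD', sinh_neg]

lemma z_re (u : ℂ) : (u ^ 2 + 1 / 4).re = u.re ^ 2 - u.im ^ 2 + 1 / 4 := by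
  have : (1 / 4 : ℂ) = ((1 / 4 : ℝ) : ℂ) := by push_cast; rfl
  rw [this, add_re, ofReal_re, pow_two, mul_re]; ring

lemma z_im (u : ℂ) : (u ^ 2 + 1 / 4).im = 2 * u.re * u.im := by
  have : (1 / 4 : ℂ) = ((1 / 4 : ℝ) : ℂ) := by push_cast; rfl
  rw [this, add_im, ofReal_im, pow_two, mul_im]; ring

/-- `numK` is bounded in the strip `|im u| ≤ 1 / 2` away from the imaginary axis. With `s = 4az`, the
factor `(2π) ^ (re s)` is absorbed by `exists_inv_Gamma_bound` for `A = 2πe`, which leaves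
`exp (π * |im s| - re s)`; here `re s ≥ 4a|re u|²` while `|im s| ≤ 4a|re u|`. -/
lemma exists_numK_bound {a w : ℝ} (ha : 0 < a) (hw0 : 0 < w) (hw1 : w ≤ 1) :
    ∃ C : ℝ, 0 < C ∧ ∀ u : ℂ, |u.im| ≤ 1 / 2 → π + 1 + 1 / a ≤ |u.re| → ‖numK a w u‖ ≤ C := by
  have hpi := Real.pi_gt_three
  have hA : 1 ≤ 2 * π * Real.exp 1 := by
    have := Real.one_le_exp (zero_le_one (α := ℝ))
    nlinarith
  obtain ⟨C, hC, hb⟩ := exists_inv_Gamma_bound _ hA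
  refine ⟨C, hC, fun u hi hr => ?_⟩
  have hinv : 0 < 1 / a := by positivity
  have hy : u.im ^ 2 ≤ 1 / 4 := by
    rw [← sq_abs]; nlinarith [abs_nonneg u.im]
  have hsre : (4 * (a : ℂ) * (u ^ 2 + 1 / 4)).re = 4 * a * (u.re ^ 2 - u.im ^ 2 + 1 / 4) := by
    rw [← z_re, show (4 * (a : ℂ)) = ((4 * a : ℝ) : ℂ) by push_cast; rfl, re_ofReal_mul]
  have hsim : (4 * (a : ℂ) * (u ^ 2 + 1 / 4)).im = 4 * a * (2 * u.re * u.im) := by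
    rw [← z_im, show (4 * (a : ℂ)) = ((4 * a : ℝ) : ℂ) by push_cast; rfl, im_ofReal_mul]
  have hlow : 4 * a * |u.re| ^ 2 ≤ 4 * a * (u.re ^ 2 - u.im ^ 2 + 1 / 4) := by
    rw [sq_abs]
    exact mul_le_mul_of_nonneg_left (by linarith) (by positivity)
  have hax : 1 ≤ a * |u.re| := by
    have : a * (1 / a) ≤ a * |u.re| := mul_le_mul_of_nonneg_left (by linarith) ha.le
    rwa [mul_one_div_cancel ha.ne'] at this
  have himb : |4 * a * (2 * u.re * u.im)| ≤ 4 * a * |u.re| := by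
    have : |4 * a * (2 * u.re * u.im)| = 4 * a * |u.re| * (2 * |u.im|) := by
      rw [abs_mul, abs_mul, abs_mul, abs_mul, abs_of_pos ha]; norm_num; ring
    rw [this]
    exact mul_le_of_le_one_right (by positivity) (by linarith)
  have h1 := hb (4 * (a : ℂ) * (u ^ 2 + 1 / 4)) (by
    rw [hsre]; refine le_trans ?_ hlow; nlinarith)
  rw [hsim, hsre] at h1
  set σ := 4 * a * (u.re ^ 2 - u.im ^ 2 + 1 / 4) with hσ
  have hw : ‖cexp ((u ^ 2 + 1 / 4) * (Real.log w : ℂ))‖ ≤ 1 := by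
    rw [norm_exp, re_mul_ofReal, z_re]
    refine Real.exp_le_one_iff.2 (mul_nonpos_of_nonneg_of_nonpos ?_ (Real.log_nonpos hw0.le hw1))
    nlinarith [sq_nonneg u.re]
  have h2 : ‖cexp ((4 * (a : ℂ) * (u ^ 2 + 1 / 4)) * (Real.log (2 * π) : ℂ))‖
      = Real.exp (σ * Real.log (2 * π)) := by
    rw [norm_exp, re_mul_ofReal, hsre]
  have h3 : (2 * π * Real.exp 1) ^ (-σ) = Real.exp (-(σ * Real.log (2 * π)) - σ) := by
    rw [Real.rpow_def_of_pos (by positivity), Real.log_mul (by positivity) (by positivity),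
      Real.log_exp]
    congr 1; ring
  rw [h3] at h1
  have hfin : Real.exp (σ * Real.log (2 * π)) * (C * Real.exp (-(σ * Real.log (2 * π)) - σ)
      * Real.exp (π * |4 * a * (2 * u.re * u.im)|)) ≤ C := by
    have : Real.exp (σ * Real.log (2 * π)) * (C * Real.exp (-(σ * Real.log (2 * π)) - σ)
      * Real.exp (π * |4 * a * (2 * u.re * u.im)|))
      = C * Real.exp (π * |4 * a * (2 * u.re * u.im)| - σ) := by
      rw [mul_assoc C, ← Real.exp_add, mul_left_comm, ← Real.exp_add]; congr 2; ring
    rw [this]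
    refine mul_le_of_le_one_right hC.le (Real.exp_le_one_iff.2 ?_)
    have h5 : π * |4 * a * (2 * u.re * u.im)| ≤ π * (4 * a * |u.re|) :=
      mul_le_mul_of_nonneg_left himb Real.pi_pos.le
    have h6 : π * (4 * a * |u.re|) ≤ |u.re| * (4 * a * |u.re|) :=
      mul_le_mul_of_nonneg_right (by linarith) (by positivity)
    nlinarith
  unfold numK
  rw [norm_mul, norm_mul, h2]
  calc _ ≤ 1 * Real.exp (σ * Real.log (2 * π)) * (C * Real.exp (-(σ * Real.log (2 * π)) - σ)
      * Real.exp (π * |4 * a * (2 * u.re * u.im)|)) := by gcongr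
    _ ≤ C := by rw [one_mul]; exact hfin

lemma norm_sinh_pi_ge (u : ℂ) : π * |u.re| ≤ ‖sinh (π * u)‖ := by
  refine le_of_sq_le_sq ?_ (norm_nonneg _)
  rw [norm_sinh_sq, re_ofReal_mul, mul_pow, sq_abs, ← mul_pow]
  nlinarith [sq_le_sinh_sq (π * u.re), sq_nonneg (Real.sin (π * u : ℂ).im)]

lemma cosArg_re (a : ℝ) (u : ℂ) : (2 * (π : ℂ) * a * (u ^ 2 + 1 / 4)).re
    = 2 * π * a * (u.re ^ 2 - u.im ^ 2 + 1 / 4) := by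
  rw [← z_re, show (2 * (π : ℂ) * a) = ((2 * π * a : ℝ) : ℂ) by push_cast; rfl, re_ofReal_mul]

lemma cosArg_im (a : ℝ) (u : ℂ) : (2 * (π : ℂ) * a * (u ^ 2 + 1 / 4)).im
    = 2 * π * a * (2 * u.re * u.im) := by
  rw [← z_im, show (2 * (π : ℂ) * a) = ((2 * π * a : ℝ) : ℂ) by push_cast; rfl, im_ofReal_mul]

lemma sinh_ne_zero_of_strip {u : ℂ} (hu : |u.im| ≤ 1 / 2) (h0 : u ≠ 0) : sinh (π * u) ≠ 0 := by
  intro h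
  have hn := norm_sinh_sq (π * u)
  rw [h, norm_zero, re_ofReal_mul, im_ofReal_mul] at hn
  have hs1 : Real.sinh (π * u.re) = 0 := by
    nlinarith [sq_nonneg (Real.sinh (π * u.re)), sq_nonneg (Real.sin (π * u.im))]
  have hs2 : Real.sin (π * u.im) = 0 := by
    nlinarith [sq_nonneg (Real.sinh (π * u.re)), sq_nonneg (Real.sin (π * u.im))]
  have hpi := Real.pi_pos
  obtain ⟨l1, l2⟩ := abs_le.1 hu
  rw [Real.sin_eq_zero_iff_of_lt_of_lt (by nlinarith) (by nlinarith)] at hs2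
  rw [Real.sinh_eq_zero] at hs1
  apply h0
  apply Complex.ext
  · simpa [hpi.ne'] using hs1
  · simpa [hpi.ne'] using hs2

/-- In the strip `|im u| ≤ 1 / 2` the denominator vanishes only at `0` and where `4az` is an odd
positive integer; odd negative values are excluded since `re z ≥ 0` in this strip. -/
lemma denD_zero {a : ℝ} (ha : 0 < a) {u : ℂ} (hu : |u.im| ≤ 1 / 2) (h : denD a u = 0) :
    u = 0 ∨ ∃ n : ℕ, u ^ 2 + 1 / 4 = (2 * n + 1) / (4 * a) := by
  have hac : (a : ℂ) ≠ 0 := by exact_mod_cast ha.ne'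
  have hpic : (π : ℂ) ≠ 0 := by simp
  rcases mul_eq_zero.1 h with h | h
  · right
    obtain ⟨k, hk⟩ := Complex.cos_eq_zero_iff.1 h
    have hz : u ^ 2 + 1 / 4 = (2 * k + 1) / (4 * a) := by
      field_simp at hk ⊢
      linear_combination (1 / 4) * hk
    have hre := congrArg re hz
    have hcast : ((2 * k + 1 : ℂ) / (4 * a)) = (((2 * k + 1) / (4 * a) : ℝ) : ℂ) := by
      push_cast; rfl
    rw [z_re, hcast, ofReal_re] at hre
    have hy : u.im ^ 2 ≤ 1 / 4 := by
      rw [← sq_abs]; nlinarith [abs_nonneg u.im]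
    have h0 : (0 : ℝ) ≤ (2 * k + 1) / (4 * a) := by
      rw [← hre]; nlinarith [sq_nonneg u.re]
    have h1 : (0 : ℝ) ≤ 2 * k + 1 := by
      by_contra hc
      exact absurd h0 (not_le.2 (div_neg_of_neg_of_pos (not_le.1 hc) (by positivity)))
    have h2 : 0 ≤ k := by
      have : (0 : ℤ) ≤ 2 * k + 1 := by exact_mod_cast h1
      omega
    lift k to ℕ using h2
    exact ⟨k, by simpa using hz⟩
  · left
    by_contra h0
    exact sinh_ne_zero_of_strip hu h0 h

/-- Zeros of the cosine factor lie on the real or the imaginary axis. -/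
lemma pole_coords {a : ℝ} (u : ℂ) (n : ℕ)
    (h : u ^ 2 + 1 / 4 = (2 * n + 1) / (4 * a)) :
    u.re ^ 2 - u.im ^ 2 + 1 / 4 = (2 * n + 1) / (4 * a) ∧ (u.re = 0 ∨ u.im = 0) := by
  have hcast : ((2 * n + 1 : ℂ) / (4 * a)) = (((2 * n + 1) / (4 * a) : ℝ) : ℂ) := by
    push_cast; rfl
  rw [hcast] at h
  have h1 := congrArg re h
  have h2 := congrArg im h
  rw [z_re, ofReal_re] at h1
  rw [z_im, ofReal_im] at h2
  refine ⟨h1, ?_⟩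
  simpa using h2

lemma pole_im_lt {a : ℝ} (ha : 0 < a) (u : ℂ) (n : ℕ)
    (h : u ^ 2 + 1 / 4 = (2 * n + 1) / (4 * a)) : |u.im| < 1 / 2 := by
  obtain ⟨h1, h2⟩ := pole_coords u n h
  have hpos : (0 : ℝ) < (2 * n + 1) / (4 * a) := by positivity
  refine abs_lt_of_sq_lt_sq ?_ (by norm_num)
  rcases h2 with h2 | h2
  · rw [h2] at h1; nlinarith
  · rw [h2]; norm_num

/-- No pole of the integrand lies on the horizontal lines `im u = ±1 / 2`. -/
lemma denD_ne_zero {a : ℝ} (ha : 0 < a) {u : ℂ} (hu : |u.im| = 1 / 2) : denD a u ≠ 0 := by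
  intro h
  rcases denD_zero ha hu.le h with rfl | ⟨n, hn⟩
  · norm_num at hu
  · exact absurd hu (pole_im_lt ha u n hn).ne

/-! ### Poles and residues -/

/-- The principal square root of `a(2n+1) - a²`; it is purely imaginary when `2n + 1 < a`. -/
noncomputable def rootS (a : ℝ) (n : ℕ) : ℂ :=
  ((a : ℂ) * (2 * (n : ℂ) + 1) - (a : ℂ) ^ 2) ^ ((1 : ℂ) / 2)

/-- The zeros of the cosine factor in the strip `|im u| ≤ 1 / 2` are `± poleP a n`. -/
noncomputable def poleP (a : ℝ) (n : ℕ) : ℂ := rootS a n / (2 * a)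

/-- The `n`-th term of the series in `stmt_19`. -/
noncomputable def termT (a w : ℝ) (n : ℕ) : ℂ :=
  (-1 : ℂ) ^ n *
    Complex.exp (((2 * (n : ℂ) + 1) / (4 * (a : ℂ))) * (Real.log w : ℂ)) *
    (2 * (π : ℂ)) ^ (2 * n) /
    (Complex.Gamma (2 * (n : ℂ) + 1) * rootS a n *
      Complex.sinh ((π : ℂ) * rootS a n / (2 * (a : ℂ))))

lemma rootS_sq (a : ℝ) (n : ℕ) : rootS a n ^ 2 = a * (2 * n + 1) - (a : ℂ) ^ 2 := by
  unfold rootS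
  rw [one_div]
  exact_mod_cast cpow_nat_inv_pow _ two_ne_zero

lemma poleP_sq {a : ℝ} (ha : 0 < a) (n : ℕ) :
    poleP a n ^ 2 + 1 / 4 = (2 * n + 1) / (4 * a) := by
  have hac : (a : ℂ) ≠ 0 := by exact_mod_cast ha.ne'
  rw [poleP, div_pow, rootS_sq]
  field_simp
  ring

lemma poleP_inj {a : ℝ} (ha : 0 < a) {n m : ℕ} (h : poleP a n ^ 2 = poleP a m ^ 2) : n = m := by
  have hac : (a : ℂ) ≠ 0 := by exact_mod_cast ha.ne'
  have h1 := poleP_sq ha n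
  rw [h, poleP_sq ha m] at h1
  field_simp at h1
  have : (m : ℂ) = n := by linear_combination (1 / 2) * h1
  exact_mod_cast this.symm

/-- As `a` is not an odd integer, no zero of the cosine factor meets the zero `u = 0` of the `sinh`
factor, so that all poles are simple. -/
lemma poleP_ne_zero {a : ℝ} (ha : 0 < a) (hodd : ∀ n : ℕ, a ≠ 2 * n + 1) (n : ℕ) :
    poleP a n ≠ 0 := by
  intro h
  have hac : (a : ℂ) ≠ 0 := by exact_mod_cast ha.ne'
  have h1 := poleP_sq ha n
  rw [h] at h1
  field_simp at h1
  apply hodd n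
  have : (a : ℂ) = 2 * n + 1 := by linear_combination h1
  exact_mod_cast this

lemma cosArg_pole {a : ℝ} (ha : 0 < a) {u : ℂ} {n : ℕ}
    (h : u ^ 2 + 1 / 4 = (2 * n + 1) / (4 * a)) :
    2 * (π : ℂ) * a * (u ^ 2 + 1 / 4) = n * π + π / 2 := by
  have hac : (a : ℂ) ≠ 0 := by exact_mod_cast ha.ne'
  rw [h]; field_simp; ring

lemma cos_pole {a : ℝ} (ha : 0 < a) {u : ℂ} {n : ℕ}
    (h : u ^ 2 + 1 / 4 = (2 * n + 1) / (4 * a)) :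
    cos (2 * (π : ℂ) * a * (u ^ 2 + 1 / 4)) = 0 := by
  rw [cosArg_pole ha h, cos_add_pi_div_two, sin_nat_mul_pi, neg_zero]

lemma sin_pole {a : ℝ} (ha : 0 < a) {u : ℂ} {n : ℕ}
    (h : u ^ 2 + 1 / 4 = (2 * n + 1) / (4 * a)) :
    sin (2 * (π : ℂ) * a * (u ^ 2 + 1 / 4)) = (-1) ^ n := by
  rw [cosArg_pole ha h, sin_add_pi_div_two]
  have := Real.cos_nat_mul_pi n
  exact_mod_cast congrArg (fun x : ℝ => (x : ℂ)) this

lemma denD'_pole {a : ℝ} (ha : 0 < a) {u : ℂ} {n : ℕ}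
    (h : u ^ 2 + 1 / 4 = (2 * n + 1) / (4 * a)) :
    denD' a u = -(-1) ^ n * (4 * π * a * u) * sinh (π * u) := by
  rw [denD', cos_pole ha h, sin_pole ha h]; ring

lemma denD'_poleP_ne_zero {a : ℝ} (ha : 0 < a) (hodd : ∀ n : ℕ, a ≠ 2 * n + 1) (n : ℕ) :
    denD' a (poleP a n) ≠ 0 := by
  have hac : (a : ℂ) ≠ 0 := by exact_mod_cast ha.ne'
  have hp := poleP_sq ha n
  have h0 := poleP_ne_zero ha hodd n
  rw [denD'_pole ha hp]
  have := sinh_ne_zero_of_strip (pole_im_lt ha _ n hp).le h0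
  have hpi : (π : ℂ) ≠ 0 := by simp
  refine mul_ne_zero (mul_ne_zero (neg_ne_zero.2 (pow_ne_zero _ (by simp))) ?_) this
  exact mul_ne_zero (mul_ne_zero (mul_ne_zero (by norm_num) hpi) hac) h0

lemma cos_pi_mul_div_two_ne_zero {a : ℝ} (hodd : ∀ n : ℕ, a ≠ 2 * n + 1) (ha : 0 < a) :
    cos ((π : ℂ) * a / 2) ≠ 0 := by
  intro h
  obtain ⟨k, hk⟩ := Complex.cos_eq_zero_iff.1 h
  have hpi : (π : ℂ) ≠ 0 := by simp
  field_simp at hk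
  have hk' : a = 2 * k + 1 := by exact_mod_cast hk
  have : 0 ≤ k := by
    have : (0 : ℝ) < 2 * k + 1 := hk' ▸ ha
    have : (0 : ℤ) < 2 * k + 1 := by exact_mod_cast this
    omega
  lift k to ℕ using this
  exact hodd k (by simpa using hk')

lemma denD'_at_zero (a : ℝ) : denD' a 0 = π * cos ((π : ℂ) * a / 2) := by
  simp only [denD']
  rw [show 2 * (π : ℂ) * a * (0 ^ 2 + 1 / 4) = (π : ℂ) * a / 2 by ring]
  simp; ring

/-- The residue at `u = 0` gives the first term of the closed form. -/
lemma numK_at_zero (a w : ℝ) : π * (numK a w 0 / denD' a 0) =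
    Complex.exp (((1 : ℂ) / 4) * (Real.log w : ℂ)) *
          Complex.exp ((a : ℂ) * (Real.log (2 * π) : ℂ)) /
          (Complex.cos ((π : ℂ) * (a : ℂ) / 2) * Complex.Gamma (a : ℂ)) := by
  have hpi : (π : ℂ) ≠ 0 := by simp
  rw [denD'_at_zero, numK, show (0 : ℂ) ^ 2 + 1 / 4 = 1 / 4 by ring,
    show 4 * (a : ℂ) * (1 / 4) = a by ring]
  field_simp

/-- The residue at `poleP a n`. -/
lemma numK_poleP {a w : ℝ} (ha : 0 < a) (hodd : ∀ n : ℕ, a ≠ 2 * n + 1) (n : ℕ) :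
    numK a w (poleP a n) / denD' a (poleP a n) = - termT a w n := by
  have hac : (a : ℂ) ≠ 0 := by exact_mod_cast ha.ne'
  have hpi : (π : ℂ) ≠ 0 := by simp
  have hp := poleP_sq ha n
  have h0 := poleP_ne_zero ha hodd n
  have hsh := sinh_ne_zero_of_strip (pole_im_lt ha _ n hp).le h0
  have hr : rootS a n = 2 * a * poleP a n := by rw [poleP]; field_simp
  have e1 : (π : ℂ) * rootS a n / (2 * (a : ℂ)) = π * poleP a n := by rw [poleP]; ring
  have e2 : 4 * (a : ℂ) * ((2 * n + 1) / (4 * a)) = 2 * n + 1 := by field_simp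
  have e3 : cexp ((2 * (n : ℂ) + 1) * (Real.log (2 * π) : ℂ)) = (2 * π) ^ (2 * n + 1) := by
    have : cexp (Real.log (2 * π) : ℂ) = 2 * π := by
      rw [← ofReal_exp, Real.exp_log (by positivity)]; push_cast; rfl
    rw [← this, ← exp_nat_mul]; push_cast; rfl
  have hG : Gamma (2 * (n : ℂ) + 1) ≠ 0 := by
    apply Gamma_ne_zero_of_re_pos
    simp; positivity
  have hsq : ((-1 : ℂ) ^ n) * (-1) ^ n = 1 := by rw [← mul_pow]; simp
  have hm : (-1 : ℂ) ^ n ≠ 0 := pow_ne_zero _ (by simp)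
  rw [denD'_pole ha hp, termT, e1, hr, numK, hp, e2, e3]
  rw [div_eq_iff (by
    refine mul_ne_zero (mul_ne_zero (neg_ne_zero.2 hm) ?_) hsh
    exact mul_ne_zero (mul_ne_zero (mul_ne_zero (by norm_num) hpi) hac) h0)]
  generalize sinh (π * poleP a n) = sh at *
  generalize Gamma (2 * (n : ℂ) + 1) = G at *
  generalize (-1 : ℂ) ^ n = m at *
  generalize cexp _ = E
  field_simp
  rw [show m ^ 2 = 1 by rw [pow_two]; exact hsq]
  ring

/-- The terms are eventually dominated by a multiple of `(2π) ^ (2n) / (2n)!`, because the root is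
real and at least `1` for large `n`. -/
lemma summable_termT {a w : ℝ} (ha : 0 < a) (hw0 : 0 < w) (hw1 : w ≤ 1) :
    Summable (termT a w) := by
  have hs : Summable (fun n : ℕ => (2 * a / π) * ((2 * π) ^ (2 * n) / (2 * n).factorial)) :=
    ((Real.summable_pow_div_factorial (2 * π)).comp_injective
      (i := fun n : ℕ => 2 * n) (fun m n h => by simpa using h)).mul_left _
  refine Summable.of_norm_bounded_eventually_nat hs ?_
  have ht : ∀ᶠ n : ℕ in Filter.atTop, a + 1 / a ≤ (n : ℝ) :=
    tendsto_natCast_atTop_atTop.eventually_ge_atTop _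
  filter_upwards [ht] with n hn
  have hn0 : (0 : ℝ) ≤ n := n.cast_nonneg
  have hr1 : 1 ≤ a * (2 * n + 1) - a ^ 2 := by
    have : a * (a + 1 / a) ≤ a * (n : ℝ) := mul_le_mul_of_nonneg_left hn ha.le
    rw [mul_add, mul_one_div_cancel ha.ne'] at this
    nlinarith [mul_nonneg ha.le hn0]
  set r := a * (2 * n + 1) - a ^ 2 with hr
  have hroot : rootS a n = ((√r : ℝ) : ℂ) := by
    rw [Real.sqrt_eq_rpow, ofReal_cpow (by linarith), rootS, hr]; push_cast; rfl
  have hsq : 1 ≤ √r := Real.one_le_sqrt.2 hr1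
  have hsinh : π / (2 * a) ≤ ‖sinh ((π : ℂ) * ((√r : ℝ) : ℂ) / (2 * (a : ℂ)))‖ := by
    have e : sinh ((π : ℂ) * ((√r : ℝ) : ℂ) / (2 * (a : ℂ)))
        = ((Real.sinh (π * √r / (2 * a)) : ℝ) : ℂ) := by push_cast; rfl
    rw [e, norm_real]
    refine le_trans ?_ (Real.le_norm_self _)
    refine le_trans ?_ (Real.self_le_sinh_iff.2 (by positivity))
    gcongr
    exact le_mul_of_one_le_right Real.pi_pos.le hsq
  have hG : Gamma (2 * (n : ℂ) + 1) = ((2 * n).factorial : ℂ) := by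
    rw [← Gamma_nat_eq_factorial]; push_cast; rfl
  have hE : ‖cexp (((2 * (n : ℂ) + 1) / (4 * (a : ℂ))) * (Real.log w : ℂ))‖ ≤ 1 := by
    have e : ((2 * (n : ℂ) + 1) / (4 * (a : ℂ))) = (((2 * n + 1) / (4 * a) : ℝ) : ℂ) := by
      push_cast; rfl
    rw [e, norm_exp, re_mul_ofReal, ofReal_re]
    exact Real.exp_le_one_iff.2 (mul_nonpos_of_nonneg_of_nonpos (by positivity)
      (Real.log_nonpos hw0.le hw1))
  have hP : ‖(2 * (π : ℂ)) ^ (2 * n)‖ = (2 * π) ^ (2 * n) := by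
    rw [norm_pow, norm_mul, norm_real, Real.norm_of_nonneg Real.pi_pos.le]; norm_num
  rw [termT, hroot, hG, norm_div, norm_mul, norm_mul, norm_mul, norm_mul, hP, norm_pow, norm_neg,
    norm_one, one_pow, one_mul, norm_real, Real.norm_of_nonneg (by positivity), norm_natCast]
  have hf : (0 : ℝ) < (2 * n).factorial := by positivity
  calc _ ≤ 1 * (2 * π) ^ (2 * n) / ((2 * n).factorial * 1 * (π / (2 * a))) := by gcongr
    _ = _ := by field_simp

/-! ### The contour integral and its limit -/

/-- The residue theorem for `numK / denD` on `[-R, R] × [-1/2, 1/2]` with `R² = N / a - 1 / 4`. The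
poles inside are `0` and `± poleP a n` for `n < 2 * N`; the residues at `poleP a n` and
`-poleP a n` agree because `numK / denD` is odd. -/
lemma contour_identity {a w : ℝ} (ha : 0 < a) (hodd : ∀ n : ℕ, a ≠ 2 * n + 1) {R : ℝ} (hR : 0 < R)
    {N : ℕ} (hN : R ^ 2 = N / a - 1 / 4) :
    rectInt (fun u => numK a w u / denD a u) (-R) R (-(1 / 2)) (1 / 2)
      = 2 * π * I * (numK a w 0 / denD' a 0 - 2 * ∑ n ∈ Finset.range (2 * N), termT a w n) := by
  classical
  set P := (Finset.range (2 * N)).image (poleP a) with hP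
  set Q := (Finset.range (2 * N)).image (fun n => -poleP a n) with hQ
  have hdisj : Disjoint P Q := by
    rw [Finset.disjoint_left]
    intro u hu hu'
    simp only [hP, hQ, Finset.mem_image] at hu hu'
    obtain ⟨n, -, rfl⟩ := hu
    obtain ⟨m, -, hm⟩ := hu'
    have : n = m := poleP_inj ha (by rw [← hm, neg_sq])
    subst this
    exact poleP_ne_zero ha hodd n (by linear_combination (-1 / 2) * hm)
  have h0 : (0 : ℂ) ∉ P ∪ Q := by
    simp only [hP, hQ, Finset.mem_union, Finset.mem_image, neg_eq_zero]
    rintro (⟨n, -, h⟩ | ⟨n, -, h⟩) <;> exact poleP_ne_zero ha hodd n h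
  have hmem : ∀ u ∈ insert 0 (P ∪ Q), u = 0 ∨
      ∃ n < 2 * N, u = poleP a n ∨ u = -poleP a n := by
    intro u hu
    simp only [hP, hQ, Finset.mem_insert, Finset.mem_union, Finset.mem_image,
      Finset.mem_range] at hu
    rcases hu with h | ⟨n, hn, rfl⟩ | ⟨n, hn, rfl⟩
    · exact .inl h
    · exact .inr ⟨n, hn, .inl rfl⟩
    · exact .inr ⟨n, hn, .inr rfl⟩
  have hsq : ∀ u n, u = poleP a n ∨ u = -poleP a n →
      u ^ 2 + 1 / 4 = (2 * n + 1) / (4 * a) := by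
    rintro u n (rfl | rfl)
    · exact poleP_sq ha n
    · rw [neg_sq]; exact poleP_sq ha n
  rw [rectInt_div (by linarith) (by norm_num) (differentiable_numK a w) (hasDerivAt_denD a)
    (insert 0 (P ∪ Q)), Finset.sum_insert h0, Finset.sum_union hdisj, hP, hQ,
    Finset.sum_image (fun n _ m _ h => poleP_inj ha (by rw [h])),
    Finset.sum_image (fun n _ m _ h => poleP_inj ha (by rw [neg_injective h]))]
  · simp only [numK_neg, denD'_neg, numK_poleP ha hodd, Finset.sum_neg_distrib]
    ring
  · intro u hu
    rcases hmem u hu with rfl | ⟨n, hn, h⟩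
    · simp [mem_reProdIm, hR]
    · have h2 := hsq u n h
      have hi := abs_lt.1 (pole_im_lt ha u n h2)
      refine ⟨?_, hi⟩
      obtain ⟨h3, h4⟩ := pole_coords u n h2
      have hlt : ((2 * n + 1) / (4 * a) : ℝ) < N / a := by
        rw [div_lt_div_iff₀ (by positivity) ha]
        have : (2 * n + 1 : ℝ) < 4 * N := by exact_mod_cast (by omega : 2 * n + 1 < 4 * N)
        nlinarith
      rw [Set.mem_preimage, Set.mem_Ioo, ← abs_lt]
      refine abs_lt_of_sq_lt_sq ?_ hR.le
      rcases h4 with h4 | h4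
      · rw [h4]; nlinarith
      · rw [h4] at h3; nlinarith
  · intro u hu
    rcases hmem u hu with rfl | ⟨n, hn, h⟩
    · simp [denD]
    · rw [denD, cos_pole ha (hsq u n h), zero_mul]
  · intro u hu
    rcases hmem u hu with rfl | ⟨n, hn, rfl | rfl⟩
    · rw [denD'_at_zero]
      exact mul_ne_zero (by simp) (cos_pi_mul_div_two_ne_zero hodd ha)
    · exact denD'_poleP_ne_zero ha hodd n
    · rw [denD'_neg]
      exact denD'_poleP_ne_zero ha hodd n
  · intro u hu hD
    obtain ⟨hre, him⟩ := hu
    rw [Set.mem_preimage, Set.mem_Icc, ← abs_le] at hre him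
    rcases denD_zero ha him hD with h | ⟨n, hn⟩
    · simp [h]
    · refine Finset.mem_insert_of_mem ?_
      have hnN : n < 2 * N := by
        obtain ⟨h3, -⟩ := pole_coords u n hn
        have h4 : u.re ^ 2 ≤ R ^ 2 := by rw [← sq_abs]; gcongr
        have h5 : ((2 * n + 1) / (4 * a) : ℝ) ≤ N / a := by nlinarith [sq_nonneg u.im]
        rw [div_le_div_iff₀ (by positivity) ha] at h5
        have h6 : (2 * n + 1 : ℝ) ≤ 4 * N := by nlinarith
        have : 2 * n + 1 ≤ 4 * N := by exact_mod_cast h6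
        omega
      have h7 : u ^ 2 = poleP a n ^ 2 := by
        linear_combination hn - poleP_sq ha n
      simp only [hP, hQ, Finset.mem_union, Finset.mem_image, Finset.mem_range]
      rcases sq_eq_sq_iff_eq_or_eq_neg.1 h7 with h | h
      · exact .inl ⟨n, hnN, h.symm⟩
      · exact .inr ⟨n, hnN, h.symm⟩

/-- The contour identity solved for the integral along the upper side: as `numK / denD` is odd, the
lower and the upper side contribute equally. -/
lemma top_side_identity {a w : ℝ} (ha : 0 < a) (hodd : ∀ n : ℕ, a ≠ 2 * n + 1) {R : ℝ}
    (hR : 0 < R) {N : ℕ} (hN : R ^ 2 = N / a - 1 / 4) :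
    ∫ x : ℝ in -R..R, I * (numK a w (x + (1 / 2 : ℝ) * I) / denD a (x + (1 / 2 : ℝ) * I))
      = π * (numK a w 0 / denD' a 0) - 2 * π * ∑ n ∈ Finset.range (2 * N), termT a w n
        - 1 / 2 * ((∫ y : ℝ in -(1 / 2)..(1 / 2), numK a w (R + y * I) / denD a (R + y * I)) -
          ∫ y : ℝ in -(1 / 2)..(1 / 2),
            numK a w ((-R : ℝ) + y * I) / denD a ((-R : ℝ) + y * I)) := by
  have h := contour_identity (w := w) ha hodd hR hN
  unfold rectInt at h
  have hbot : ∫ x : ℝ in -R..R,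
      numK a w (x + (-(1 / 2) : ℝ) * I) / denD a (x + (-(1 / 2) : ℝ) * I)
      = -∫ x : ℝ in -R..R, numK a w (x + (1 / 2 : ℝ) * I) / denD a (x + (1 / 2 : ℝ) * I) := by
    have := intervalIntegral.integral_comp_neg (a := -R) (b := R) (fun x : ℝ =>
      numK a w (x + (-(1 / 2) : ℝ) * I) / denD a (x + (-(1 / 2) : ℝ) * I))
    rw [neg_neg] at this
    rw [← this, ← intervalIntegral.integral_neg]
    refine intervalIntegral.integral_congr fun x _ => ?_
    have e : ((-x : ℝ) : ℂ) + (-(1 / 2) : ℝ) * I = -(x + (1 / 2 : ℝ) * I) := by push_cast; ring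
    simp only [e, numK_neg, denD_neg, div_neg]
  rw [hbot] at h
  rw [intervalIntegral.integral_const_mul]
  linear_combination (-I / 2) * h - (π * (numK a w 0 / denD' a 0) - 2 * π *
    ∑ n ∈ Finset.range (2 * N), termT a w n - 1 / 2 *
    ((∫ y : ℝ in -(1 / 2)..(1 / 2), numK a w (R + y * I) / denD a (R + y * I)) -
          ∫ y : ℝ in -(1 / 2)..(1 / 2),
            numK a w ((-R : ℝ) + y * I) / denD a ((-R : ℝ) + y * I))) * I_sq

/-- On the vertical sides the cosine has norm at least `1 / 2`: the real part of its argument is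
`2πN - 2πa (im u)²`, so its real cosine is at least `1 / 2` for `a (im u)² ≤ 1 / 6`, while otherwise
the imaginary part of the argument is large. -/
lemma side_cos_bound {a : ℝ} (ha : 0 < a) {u : ℂ} {N : ℕ} (hN : u.re ^ 2 = N / a - 1 / 4)
    (hR : 1 + 1 / a ≤ |u.re|) :
    1 / 2 ≤ ‖cos (2 * (π : ℂ) * a * (u ^ 2 + 1 / 4))‖ := by
  have hpi := Real.pi_gt_three
  refine le_of_sq_le_sq ?_ (norm_nonneg _)
  rw [norm_cos_sq, cosArg_re, cosArg_im]
  rcases le_or_gt (a * u.im ^ 2) (1 / 6) with h | h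
  · have e : 2 * π * a * (u.re ^ 2 - u.im ^ 2 + 1 / 4)
        = N * (2 * π) - 2 * π * (a * u.im ^ 2) := by
      rw [hN]; field_simp; ring
    have hc : 1 / 2 ≤ Real.cos (2 * π * a * (u.re ^ 2 - u.im ^ 2 + 1 / 4)) := by
      rw [e, Real.cos_nat_mul_two_pi_sub, ← Real.cos_pi_div_three]
      refine Real.cos_le_cos_of_nonneg_of_le_pi (by positivity) (by linarith) ?_
      nlinarith
    nlinarith [sq_nonneg (Real.sinh (2 * π * a * (2 * u.re * u.im)))]
  · have hs := sq_le_sinh_sq (2 * π * a * (2 * u.re * u.im))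
    have hax : 1 ≤ a * |u.re| := by
      have : a * (1 / a) ≤ a * |u.re| := mul_le_mul_of_nonneg_left (by linarith) ha.le
      rwa [mul_one_div_cancel ha.ne'] at this
    have hx1 : 1 ≤ |u.re| := by
      have : 0 < 1 / a := by positivity
      linarith
    have hax2 : 1 ≤ a * u.re ^ 2 := by
      rw [← sq_abs]; nlinarith
    have hprod : 1 / 6 ≤ (a * u.re ^ 2) * (a * u.im ^ 2) := by nlinarith
    have e : (2 * π * a * (2 * u.re * u.im)) ^ 2
        = 16 * π ^ 2 * ((a * u.re ^ 2) * (a * u.im ^ 2)) := by ring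
    have hp2 : 9 ≤ π ^ 2 := by nlinarith
    rw [e] at hs
    nlinarith [sq_nonneg (Real.cos (2 * π * a * (u.re ^ 2 - u.im ^ 2 + 1 / 4)))]

/-- On the line `im u = 1 / 2` both factors of the denominator grow at least linearly, so the integrand
is `O(1 / x²)`. -/
lemma integrable_top {a w : ℝ} (ha : 0 < a) (hw0 : 0 < w) (hw1 : w ≤ 1) :
    Integrable fun x : ℝ =>
      I * (numK a w (x + (1 / 2 : ℝ) * I) / denD a (x + (1 / 2 : ℝ) * I)) := by
  obtain ⟨C, hC, hb⟩ := exists_numK_bound ha hw0 hw1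
  have hcont : Continuous fun x : ℝ =>
      I * (numK a w (x + (1 / 2 : ℝ) * I) / denD a (x + (1 / 2 : ℝ) * I)) := by
    refine continuous_const.mul (Continuous.div ?_ ?_ fun x => ?_)
    · exact (differentiable_numK a w).continuous.comp (by fun_prop)
    · have : Continuous (denD a) := by unfold denD; fun_prop
      exact this.comp (by fun_prop)
    · refine denD_ne_zero ha ?_
      norm_num
  refine hcont.locallyIntegrable.integrable_of_isBigO_cocompact (g := fun x : ℝ => (1 + x ^ 2)⁻¹)
    ?_ (integrable_inv_one_add_sq.integrableAtFilter _)
  refine Asymptotics.IsBigO.of_bound (C / (π ^ 2 * a)) ?_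
  have hcc : ∀ᶠ x : ℝ in Filter.cocompact ℝ, π + 1 + 1 / a ≤ |x| :=
    tendsto_norm_cocompact_atTop.eventually_ge_atTop _
  filter_upwards [hcc] with x hx
  have hpi := Real.pi_gt_three
  have hinv : 0 < 1 / a := by positivity
  have hx1 : 1 ≤ x ^ 2 := by rw [← sq_abs]; nlinarith
  set u : ℂ := x + (1 / 2 : ℝ) * I with hu
  have hre : u.re = x := by simp [hu]
  have him : u.im = 1 / 2 := by simp [hu]
  have hK := hb u (by rw [him]; norm_num) (by rwa [hre])
  have h1 := norm_sinh_pi_ge u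
  have h2 : 2 * π * a * |x| ≤ ‖cos (2 * (π : ℂ) * a * (u ^ 2 + 1 / 4))‖ := by
    refine le_of_sq_le_sq ?_ (norm_nonneg _)
    rw [norm_cos_sq, cosArg_im, hre, him, mul_pow, sq_abs, ← mul_pow,
      show 2 * π * a * (2 * x * (1 / 2)) = 2 * π * a * x by ring]
    nlinarith [sq_le_sinh_sq (2 * π * a * x),
      sq_nonneg (Real.cos (2 * (π : ℂ) * a * (u ^ 2 + 1 / 4)).re)]
  have hx0 : 0 < |x| := by linarith
  have hD : π ^ 2 * a * (1 + x ^ 2) ≤ ‖denD a u‖ := by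
    rw [denD, norm_mul]
    rw [hre] at h1
    calc π ^ 2 * a * (1 + x ^ 2) ≤ π ^ 2 * a * (2 * x ^ 2) := by gcongr; linarith
      _ = (2 * π * a * |x|) * (π * |x|) := by
        rw [← sq_abs x]; ring
      _ ≤ _ := by gcongr
  rw [norm_mul, norm_I, one_mul, norm_div, Real.norm_of_nonneg (by positivity)]
  calc ‖numK a w u‖ / ‖denD a u‖ ≤ C / (π ^ 2 * a * (1 + x ^ 2)) := by gcongr
    _ = _ := by field_simp

/-- The integral over a vertical side of the contour is `O(1 / |x|)`. -/
lemma side_integral_bound {a w : ℝ} (ha : 0 < a) {C : ℝ}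
    (hb : ∀ u : ℂ, |u.im| ≤ 1 / 2 → π + 1 + 1 / a ≤ |u.re| → ‖numK a w u‖ ≤ C)
    {x : ℝ} {N : ℕ} (hN : x ^ 2 = N / a - 1 / 4) (hx : π + 1 + 1 / a ≤ |x|) :
    ‖∫ y : ℝ in -(1 / 2)..(1 / 2), numK a w (x + y * I) / denD a (x + y * I)‖
      ≤ 2 * C / |x| := by
  have hpi := Real.pi_gt_three
  have hinv : 0 < 1 / a := by positivity
  have hx0 : 0 < |x| := by linarith
  have := intervalIntegral.norm_integral_le_of_norm_le_const (a := -(1 / 2 : ℝ)) (b := 1 / 2)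
    (f := fun y : ℝ => numK a w (x + y * I) / denD a (x + y * I)) (C := 2 * C / |x|) (by
    intro y hy
    rw [Set.uIoc_of_le (by norm_num)] at hy
    have hre : (x + y * I : ℂ).re = x := by simp
    have him : (x + y * I : ℂ).im = y := by simp
    have hK := hb (x + y * I) (by rw [him]; exact abs_le.2 ⟨hy.1.le, hy.2⟩) (by rwa [hre])
    have h1 := norm_sinh_pi_ge (x + y * I)
    have h2 := side_cos_bound ha (u := x + y * I) (N := N) (by rwa [hre]) (by rw [hre]; linarith)
    rw [hre] at h1
    have hC : 0 ≤ C := (norm_nonneg _).trans hK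
    have hD : 1 / 2 * |x| ≤ ‖denD a (x + y * I)‖ := by
      rw [denD, norm_mul]
      refine mul_le_mul h2 (le_trans ?_ h1) hx0.le (norm_nonneg _)
      exact le_mul_of_one_le_left hx0.le (by linarith)
    rw [norm_div]
    calc _ ≤ C / (1 / 2 * |x|) := by gcongr
      _ = _ := by field_simp)
  refine this.trans_eq ?_
  norm_num

open Filter Topology in
/-- The limit `N → ∞` of `top_side_identity`. -/
lemma integral_top_eq {a w : ℝ} (ha : 0 < a) (hodd : ∀ n : ℕ, a ≠ 2 * n + 1)
    (hw0 : 0 < w) (hw1 : w ≤ 1) :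
    ∫ x : ℝ, I * (numK a w (x + (1 / 2 : ℝ) * I) / denD a (x + (1 / 2 : ℝ) * I))
      = π * (numK a w 0 / denD' a 0) - 2 * π * ∑' n, termT a w n := by
  obtain ⟨C, hC, hb⟩ := exists_numK_bound ha hw0 hw1
  set R : ℕ → ℝ := fun N => √(N / a - 1 / 4) with hRdef
  have hRtop : Tendsto R atTop atTop := by
    refine Real.tendsto_sqrt_atTop.comp ?_
    refine tendsto_atTop_add_const_right _ _ ?_
    exact tendsto_natCast_atTop_atTop.atTop_div_const ha
  have hpi := Real.pi_gt_three
  have hinv : 0 < 1 / a := by positivity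
  have hev : ∀ᶠ N in atTop, π + 1 + 1 / a ≤ R N := hRtop.eventually_ge_atTop _
  have hRsq : ∀ N, 0 < R N → R N ^ 2 = N / a - 1 / 4 := fun N h =>
    Real.sq_sqrt (Real.sqrt_pos.1 h).le
  have hlim := intervalIntegral_tendsto_integral (integrable_top ha hw0 hw1)
    (tendsto_neg_atTop_atBot.comp hRtop) hRtop
  refine tendsto_nhds_unique hlim ?_
  have hz : Tendsto (fun N => 2 * C / R N) atTop (𝓝 0) := hRtop.const_div_atTop _
  have hs1 : Tendsto (fun N => ∫ y : ℝ in -(1 / 2)..(1 / 2),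
      numK a w ((R N : ℝ) + y * I) / denD a ((R N : ℝ) + y * I)) atTop (𝓝 0) := by
    refine squeeze_zero_norm' ?_ hz
    filter_upwards [hev] with N hN
    have h0 : 0 < R N := by linarith
    have := side_integral_bound ha hb (hRsq N h0) (by rwa [abs_of_pos h0])
    rwa [abs_of_pos h0] at this
  have hs2 : Tendsto (fun N => ∫ y : ℝ in -(1 / 2)..(1 / 2),
      numK a w ((-R N : ℝ) + y * I) / denD a ((-R N : ℝ) + y * I)) atTop (𝓝 0) := by
    refine squeeze_zero_norm' ?_ hz
    filter_upwards [hev] with N hN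
    have h0 : 0 < R N := by linarith
    have := side_integral_bound (x := -R N) ha hb (by rw [neg_sq]; exact hRsq N h0)
      (by rwa [abs_neg, abs_of_pos h0])
    rwa [abs_neg, abs_of_pos h0] at this
  have hsum : Tendsto (fun N : ℕ => ∑ n ∈ Finset.range (2 * N), termT a w n) atTop
      (𝓝 (∑' n, termT a w n)) :=
    (summable_termT ha hw0 hw1).hasSum.tendsto_sum_nat.comp
      (tendsto_id.const_mul_atTop' (by norm_num))
  have hall := ((tendsto_const_nhds (x := π * (numK a w 0 / denD' a 0))).sub
    (hsum.const_mul (2 * π : ℂ))).sub ((hs1.sub hs2).const_mul (1 / 2 : ℂ))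
  simp only [sub_zero, mul_zero] at hall
  refine hall.congr' ?_
  filter_upwards [hev] with N hN
  have h0 : 0 < R N := by linarith
  exact (top_side_identity ha hodd h0 (hRsq N h0)).symm

theorem stmt_19 (a w : ℝ) (ha : 0 < a) (hodd : ∀ n : ℕ, a ≠ 2 * n + 1)
    (hw0 : 0 < w) (hw1 : w ≤ 1) :
    ∫ v : ℝ, Complex.exp (((v : ℂ) ^ 2 + I * (v : ℂ)) * (Real.log w : ℂ)) *
        Complex.exp ((4 * (a : ℂ) * ((v : ℂ) ^ 2 + I * (v : ℂ))) * (Real.log (2 * π) : ℂ)) /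
        (Complex.cos (2 * (π : ℂ) * (a : ℂ) * ((v : ℂ) ^ 2 + I * (v : ℂ))) *
          Complex.Gamma (4 * (a : ℂ) * ((v : ℂ) ^ 2 + I * (v : ℂ))) *
          Complex.cosh ((π : ℂ) * (v : ℂ)))
    = Complex.exp (((1 : ℂ) / 4) * (Real.log w : ℂ)) *
          Complex.exp ((a : ℂ) * (Real.log (2 * π) : ℂ)) /
          (Complex.cos ((π : ℂ) * (a : ℂ) / 2) * Complex.Gamma (a : ℂ))
      - 2 * (π : ℂ) * ∑' n : ℕ,
          (-1 : ℂ) ^ n *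
            Complex.exp (((2 * (n : ℂ) + 1) / (4 * (a : ℂ))) * (Real.log w : ℂ)) *
            (2 * (π : ℂ)) ^ (2 * n) /
            (Complex.Gamma (2 * (n : ℂ) + 1) *
              (((a : ℂ) * (2 * (n : ℂ) + 1) - (a : ℂ) ^ 2) ^ ((1 : ℂ) / 2)) *
              Complex.sinh ((π : ℂ) *
                (((a : ℂ) * (2 * (n : ℂ) + 1) - (a : ℂ) ^ 2) ^ ((1 : ℂ) / 2)) /
                (2 * (a : ℂ)))) := by
  have h := integral_top_eq ha hodd hw0 hw1
  rw [numK_at_zero] at h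
  refine Eq.trans (integral_congr_ae (.of_forall fun v => ?_)) h
  have hz : ((v : ℂ) + (1 / 2 : ℝ) * I) ^ 2 + 1 / 4 = (v : ℂ) ^ 2 + I * v := by
    push_cast
    linear_combination (1 / 4) * I_sq
  have hs : sinh ((π : ℂ) * (v + (1 / 2 : ℝ) * I)) = I * cosh (π * v) := by
    rw [show (π : ℂ) * (v + (1 / 2 : ℝ) * I) = π * v + (π / 2 : ℂ) * I by push_cast; ring,
      sinh_add, sinh_mul_I, cosh_mul_I, cos_pi_div_two, sin_pi_div_two]
    ring
  -- at `v = 0` both sides vanish, in accordance with `Γ 0 = 0` and `1 / Γ 0 = 0`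
  simp only [numK, denD, hz, hs]
  field_simp
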